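/- arXiv:1810.04054 — 2 statements merged into one kernel-verified Lean document; each statement's English description precedes it below -/
import Mathlib

section
/- Let α > 0 and let k_l, k_s, d_l, d_s, γ, T_i, T_∞ be positive constants with ω = √(d_l/d_s), and set h₀* = 2^α Γ(α/2 + 1) k_s T_i d_s^{(α−1)/2} / (T_∞ √π). For each h₀ > h₀*, let ν(h₀) denote the unique x > 0 satisfying equation (24): −(k_s T_i d_s^{(α−1)/2} / (γ d_l^{(α+1)/2})) f₁(x) + (h₀ T_∞ / (γ 2^α d_l^{(α+1)/2})) f₂(x; h₀) = x^{α+1}, and let ν_∞ denote the unique x > 0 satisfying (k_l T_∞ / (2^{α+1} d_l^{α/2+1} γ)) f₃(x) − (k_s T_i d_s^{(α−1)/2} / (γ d_l^{(α+1)/2})) f₁(x) = x^{α+1}. Then ν(h₀) tends to ν_∞ as h₀ → +∞. -/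
noncomputable def poch (a : ℝ) (s : ℕ) : ℝ := ∏ i ∈ Finset.range s, (a + i)

/-- Kummer's confluent hypergeometric function `M(a,b,z)`,
defined by the everywhere-convergent series `M(a,b,z) = Σ_{s} (a)_s z^s / ((b)_s s!)`. -/
noncomputable def kummerM (a b z : ℝ) : ℝ :=
  ∑' s : ℕ, poch a s / (poch b s * (Nat.factorial s)) * z ^ s

/-- Tricomi's confluent hypergeometric function
`U(a,b,z) = (1/Γ(a)) ∫_0^∞ e^{−z t} t^{a−1} (1+t)^{b−a−1} dt`. -/
noncomputable def tricomiU (a b z : ℝ) : ℝ :=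
  (1 / Real.Gamma a) *
    ∫ t in Set.Ioi (0:ℝ), Real.exp (-z * t) * t ^ (a - 1) * (1 + t) ^ (b - a - 1)

lemma poch_pos {a : ℝ} (ha : 0 < a) (s : ℕ) : 0 < poch a s :=
  Finset.prod_pos fun i _ => by positivity

lemma poch_le {a b : ℝ} (ha : 0 < a) (hb : 0 < b) (s : ℕ) :
    poch a s ≤ (a / b + 1) ^ s * poch b s := by
  unfold poch
  induction s with
  | zero => simp
  | succ n ih =>
    rw [Finset.prod_range_succ, Finset.prod_range_succ, pow_succ]
    have h : a + n ≤ (a / b + 1) * (b + n) := by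
      have h1 : (a / b + 1) * (b + n) = a + n + b + a / b * n := by field_simp; ring
      rw [h1]
      have : 0 ≤ a / b * n := by positivity
      linarith
    calc _ ≤ ((a / b + 1) ^ n * ∏ i ∈ Finset.range n, (b + i)) * ((a / b + 1) * (b + n)) := by
            apply mul_le_mul ih h (by positivity)
            exact mul_nonneg (by positivity) (poch_pos hb n).le
      _ = _ := by ring

lemma kummer_summable {a b z : ℝ} (ha : 0 < a) (hb : 0 < b) (hz : 0 ≤ z) :
    Summable fun s : ℕ => poch a s / (poch b s * (Nat.factorial s)) * z ^ s := by
  refine Summable.of_nonneg_of_le (fun s => ?_) (fun s => ?_)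
    (Real.summable_pow_div_factorial ((a / b + 1) * z))
  · have := poch_pos ha s
    have := poch_pos hb s
    positivity
  · have h1 := poch_pos hb s
    have h2 := poch_le ha hb s
    rw [mul_pow, mul_div_right_comm]
    apply mul_le_mul_of_nonneg_right _ (by positivity)
    rw [div_le_div_iff₀ (by positivity) (by positivity)]
    calc _ ≤ ((a / b + 1) ^ s * poch b s) * (Nat.factorial s : ℝ) := by gcongr
      _ = _ := by ring

lemma kummer_mono {a b z w : ℝ} (ha : 0 < a) (hb : 0 < b) (hz : 0 ≤ z) (h : z ≤ w) :
    kummerM a b z ≤ kummerM a b w := by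
  refine Summable.tsum_le_tsum (fun s => ?_) (kummer_summable ha hb hz)
    (kummer_summable ha hb (hz.trans h))
  have := poch_pos ha s
  have := poch_pos hb s
  gcongr

lemma kummer_pos {a b z : ℝ} (ha : 0 < a) (hb : 0 < b) (hz : 0 ≤ z) :
    0 < kummerM a b z := by
  refine (kummer_summable ha hb hz).tsum_pos (fun s => ?_) 0 ?_
  · have := poch_pos ha s
    have := poch_pos hb s
    positivity
  · simp [poch]

lemma tricomi_integrable {a b z : ℝ} (ha : 0 < a) (hb : b - a - 1 ≤ 0) (hz : 0 < z) :
    MeasureTheory.IntegrableOn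
      (fun t : ℝ => Real.exp (-z * t) * t ^ (a - 1) * (1 + t) ^ (b - a - 1)) (Set.Ioi 0) := by
  have h := integrableOn_rpow_mul_exp_neg_mul_rpow (s := a - 1) (p := 1) (b := z) (by linarith)
    one_pos hz
  refine MeasureTheory.Integrable.mono' h ?_ ?_
  · apply Measurable.aestronglyMeasurable
    fun_prop
  · filter_upwards [MeasureTheory.ae_restrict_mem measurableSet_Ioi] with t ht
    have ht : 0 < t := ht
    rw [Real.norm_of_nonneg (by positivity), Real.rpow_one]
    have : (1 + t) ^ (b - a - 1) ≤ 1 := Real.rpow_le_one_of_one_le_of_nonpos (by linarith) hb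
    calc _ ≤ Real.exp (-z * t) * t ^ (a - 1) * 1 := by gcongr
      _ = _ := by ring

lemma tricomi_anti {a b z w : ℝ} (ha : 0 < a) (hb : b - a - 1 ≤ 0) (hz : 0 < z) (h : z ≤ w) :
    tricomiU a b w ≤ tricomiU a b z := by
  unfold tricomiU
  have := Real.Gamma_pos_of_pos ha
  refine mul_le_mul_of_nonneg_left ?_ (by positivity)
  refine MeasureTheory.setIntegral_mono_on (tricomi_integrable ha hb (hz.trans_le h))
    (tricomi_integrable ha hb hz) measurableSet_Ioi fun t ht => ?_
  have ht : 0 < t := ht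
  gcongr

lemma tricomi_pos {a b z : ℝ} (ha : 0 < a) (hb : b - a - 1 ≤ 0) (hz : 0 < z) :
    0 < tricomiU a b z := by
  unfold tricomiU
  have := Real.Gamma_pos_of_pos ha
  refine mul_pos (by positivity) ?_
  rw [MeasureTheory.setIntegral_pos_iff_support_of_nonneg_ae _ (tricomi_integrable ha hb hz)]
  · refine lt_of_lt_of_le (b := MeasureTheory.volume (Set.Ioi (0:ℝ))) (by simp) ?_
    apply MeasureTheory.measure_mono
    intro t ht
    have ht' : 0 < t := ht
    refine ⟨?_, ht⟩
    simp only [Function.mem_support]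
    positivity
  · filter_upwards [MeasureTheory.ae_restrict_mem measurableSet_Ioi] with t ht
    have ht : 0 < t := ht
    simp only [Pi.zero_apply]
    positivity

/-- Abstract monotone argument. -/
lemma limit_abstract (B C L : ℝ) (hC : 0 < C) (hL : 0 < L) (g p q : ℝ → ℝ)
    (hg : ∀ x, 0 < x → 0 < g x) (hp : ∀ x, 0 < x → 0 < p x) (hq : ∀ x, 0 < x → 0 < q x)
    (hgm : ∀ x y, 0 < x → x < y → g x < g y) (hpm : ∀ x y, 0 < x → x < y → p x ≤ p y)
    (hqm : ∀ x y, 0 < x → x < y → q x ≤ q y) (ν : ℝ → ℝ) (h0 : ℝ)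
    (hν : ∀ h, h0 < h → 0 < ν h ∧ h * C * (1 / (p (ν h) + L * h * q (ν h))) = g (ν h))
    (n : ℝ) (hn : 0 < n) (hB : B = C / L) (hninf : B * (1 / q n) = g n) :
    Filter.Tendsto ν Filter.atTop (nhds n) := by
  have hΦ : ∀ x y, 0 < x → x < y → g x * q x < g y * q y := fun x y hx hxy =>
    mul_lt_mul (hgm x y hx hxy) (hqm x y hx hxy) (hq x hx) (hg y (hx.trans hxy)).le
  have hn' : g n * q n = B := by
    have := hq n hn
    rw [← hninf]; field_simp
  have key : ∀ h, h0 < h → 0 < h → g (ν h) * q (ν h) + g (ν h) * p (ν h) / (L * h) = B := by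
    intro h h1 h2
    obtain ⟨h3, h4⟩ := hν h h1
    have := hq _ h3
    have := hp _ h3
    rw [← h4, hB]; field_simp
    ring
  have hlt : ∀ h, h0 < h → 0 < h → ν h < n := by
    intro h h1 h2
    obtain ⟨h3, -⟩ := hν h h1
    by_contra! hc
    have k := key h h1 h2
    have : g n * q n ≤ g (ν h) * q (ν h) := by
      rcases hc.eq_or_lt with h | h
      · rw [← h]
      · exact (hΦ _ _ hn h).le
    have := hg _ h3
    have := hp _ h3
    have : 0 < g (ν h) * p (ν h) / (L * h) := by positivity
    linarith
  rw [tendsto_order]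
  constructor
  · intro y hy
    obtain ⟨y', hy'0, hyy', hy'n⟩ : ∃ y', 0 < y' ∧ y ≤ y' ∧ y' < n :=
      ⟨max y (n / 2), by positivity, le_max_left _ _, max_lt hy (by linarith)⟩
    have hd : 0 < g n * q n - g y' * q y' := sub_pos.2 (hΦ _ _ hy'0 hy'n)
    filter_upwards [Filter.eventually_gt_atTop h0, Filter.eventually_gt_atTop 0,
      Filter.eventually_gt_atTop (g n * p n / (L * (g n * q n - g y' * q y')))] with h h1 h2 h3
    refine hyy'.trans_lt ?_
    by_contra! hc
    obtain ⟨h5, -⟩ := hν h h1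
    have k := key h h1 h2
    have hl := hlt h h1 h2
    have e1 : g (ν h) * p (ν h) / (L * h) ≤ g n * p n / (L * h) := by
      have := hgm _ _ h5 hl
      have := hpm _ _ h5 hl
      have := hg _ hn
      have := hp _ h5
      gcongr
    have e2 : g n * p n / (L * h) < g n * q n - g y' * q y' := by
      rw [div_lt_iff₀ (by positivity)] at h3 ⊢
      linarith
    have e3 : g (ν h) * q (ν h) ≤ g y' * q y' := by
      rcases hc.eq_or_lt with h | h
      · rw [← h]
      · exact (hΦ _ _ h5 h).le
    linarith
  · intro y hy
    filter_upwards [Filter.eventually_gt_atTop h0, Filter.eventually_gt_atTop 0] with h h1 h2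
    exact (hlt h h1 h2).trans hy

/-- the coefficient `ν(h₀)` characterizing the free boundary (the unique
positive solution of equation (24)) converges, as the heat transfer coefficient
`h₀ → +∞`, to the unique positive solution `ν_∞` of the limit equation corresponding
to a prescribed temperature at the fixed face. -/
theorem statement_16 (α kl ks dl ds γ Ti Tinf : ℝ)
    (hα : 0 < α) (hkl : 0 < kl) (hks : 0 < ks) (hdl : 0 < dl) (hds : 0 < ds)
    (hγ : 0 < γ) (hTi : 0 < Ti) (hTinf : 0 < Tinf)
    (ω : ℝ) (hω : ω = Real.sqrt (dl / ds))
    (h₀star : ℝ)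
    (hstar : h₀star = (2:ℝ) ^ α * Real.Gamma (α / 2 + 1) * ks * Ti * ds ^ ((α - 1) / 2)
      / (Tinf * Real.sqrt Real.pi))
    (ν : ℝ → ℝ)
    (hν : ∀ h₀ : ℝ, h₀star < h₀ →
      0 < ν h₀ ∧
      -(ks * Ti * ds ^ ((α - 1) / 2) / (γ * dl ^ ((α + 1) / 2))) *
          (1 / tricomiU (α / 2 + 1 / 2) (1 / 2) ((ν h₀) ^ 2 * ω ^ 2))
        + h₀ * Tinf / (γ * (2:ℝ) ^ α * dl ^ ((α + 1) / 2)) *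
          (1 / (kummerM (α / 2 + 1 / 2) (1 / 2) ((ν h₀) ^ 2)
                + 2 * Real.sqrt dl * h₀ / kl * (ν h₀) * kummerM (α / 2 + 1) (3 / 2) ((ν h₀) ^ 2)))
        = (ν h₀) ^ (α + 1))
    (νinf : ℝ)
    (hνinf : 0 < νinf ∧
      kl * Tinf / ((2:ℝ) ^ (α + 1) * dl ^ (α / 2 + 1) * γ) *
          (1 / (νinf * kummerM (α / 2 + 1) (3 / 2) (νinf ^ 2)))
        - ks * Ti * ds ^ ((α - 1) / 2) / (γ * dl ^ ((α + 1) / 2)) *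
          (1 / tricomiU (α / 2 + 1 / 2) (1 / 2) (νinf ^ 2 * ω ^ 2))
        = νinf ^ (α + 1)) :
    Filter.Tendsto ν Filter.atTop (nhds νinf) := by
  have hωp : 0 < ω := by rw [hω]; positivity
  have ha : 0 < α / 2 + 1 / 2 := by positivity
  have hb : (1 / 2 : ℝ) - (α / 2 + 1 / 2) - 1 ≤ 0 := by linarith
  have hA : 0 < ks * Ti * ds ^ ((α - 1) / 2) / (γ * dl ^ ((α + 1) / 2)) := by positivity
  set A := ks * Ti * ds ^ ((α - 1) / 2) / (γ * dl ^ ((α + 1) / 2)) with hAdef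
  have hU : ∀ x, 0 < x → 0 < tricomiU (α / 2 + 1 / 2) (1 / 2) (x ^ 2 * ω ^ 2) :=
    fun x hx => tricomi_pos ha hb (by positivity)
  refine limit_abstract (kl * Tinf / ((2:ℝ) ^ (α + 1) * dl ^ (α / 2 + 1) * γ))
    (Tinf / (γ * (2:ℝ) ^ α * dl ^ ((α + 1) / 2))) (2 * Real.sqrt dl / kl)
    (by positivity) (by positivity)
    (fun x => x ^ (α + 1) + A * (1 / tricomiU (α / 2 + 1 / 2) (1 / 2) (x ^ 2 * ω ^ 2)))
    (fun x => kummerM (α / 2 + 1 / 2) (1 / 2) (x ^ 2))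
    (fun x => x * kummerM (α / 2 + 1) (3 / 2) (x ^ 2))
    ?_ ?_ ?_ ?_ ?_ ?_ ν h₀star ?_ νinf hνinf.1 ?_ ?_
  · intro x hx
    have := hU x hx
    positivity
  · intro x hx
    exact kummer_pos ha (by norm_num) (by positivity)
  · intro x hx
    exact mul_pos hx (kummer_pos (by positivity) (by norm_num) (by positivity))
  · intro x y hx hxy
    have h1 := hU y (hx.trans hxy)
    have h2 : tricomiU (α / 2 + 1 / 2) (1 / 2) (y ^ 2 * ω ^ 2)
        ≤ tricomiU (α / 2 + 1 / 2) (1 / 2) (x ^ 2 * ω ^ 2) :=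
      tricomi_anti ha hb (by positivity) (by gcongr)
    have h3 : x ^ (α + 1) < y ^ (α + 1) := Real.rpow_lt_rpow hx.le hxy (by positivity)
    refine add_lt_add_of_lt_of_le h3 ?_
    exact mul_le_mul_of_nonneg_left (one_div_le_one_div_of_le h1 h2) hA.le
  · intro x y hx hxy
    exact kummer_mono ha (by norm_num) (by positivity) (by gcongr)
  · intro x y hx hxy
    exact mul_le_mul hxy.le (kummer_mono (by positivity) (by norm_num) (by positivity)
      (by gcongr)) (kummer_pos (by positivity) (by norm_num) (by positivity)).le
      (hx.trans hxy).le
  · intro h hh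
    obtain ⟨h1, h2⟩ := hν h hh
    refine ⟨h1, ?_⟩
    rw [← h2]
    have e : ∀ m : ℝ, 2 * Real.sqrt dl / kl * h * (ν h * m) =
      2 * Real.sqrt dl * h / kl * ν h * m := fun m => by ring
    rw [e]
    ring
  · have e1 : (2:ℝ) ^ (α + 1) = 2 ^ α * 2 := by
      rw [Real.rpow_add (by norm_num), Real.rpow_one]
    have e2 : dl ^ (α / 2 + 1) = dl ^ ((α + 1) / 2) * Real.sqrt dl := by
      rw [Real.sqrt_eq_rpow, ← Real.rpow_add hdl]; congr 1; ring
    rw [e1, e2]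
    field_simp
  · have := hνinf.2
    linarith
end

section
/- Let α > 0 be a non-integer real number and let k_s, d_s, T_i, T_∞, h₀ be positive constants with 0 < h₀ ≤ 2^α Γ(α/2 + 1) k_s T_i d_s^{(α−1)/2} / (T_∞ √π). Define E_s = [ −T_i d_s^{α/2} k_s Γ(α+1) + Γ((α+1)/2) h₀ √(d_s) T_∞ ] / [ k_s Γ(α/2 + 1) + h₀ √(d_s) Γ((α+1)/2) ] and F_s = 2√(d_s) h₀ (E_s − T_∞)/k_s, and set Ψ_s(x,t) = t^{α/2}[ E_s M(−α/2, 1/2, −η_s²) + F_s η_s M(−α/2 + 1/2, 3/2, −η_s²) ] with η_s = x/(2√(d_s t)). Then: (i) ∂Ψ_s/∂t(x,t) = d_s ∂²Ψ_s/∂x²(x,t) for all x > 0, t > 0; (ii) k_s ∂Ψ_s/∂x(0,t) = h₀ t^{−1/2} ( Ψ_s(0,t) − T_∞ t^{α/2} ) for all t > 0; (iii) for every x > 0, lim_{t→0⁺} Ψ_s(x,t) = −T_i x^α. -/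
lemma poch_succ (a : ℝ) (s : ℕ) : poch a (s+1) = poch a s * (a + s) := by
  simp [poch, Finset.prod_range_succ]

lemma poch_succ_left (a : ℝ) (s : ℕ) : poch a (s+1) = a * poch (a+1) s := by
  simp only [poch, Finset.prod_range_succ']
  rw [mul_comm]
  congr 1
  · simp
  · apply Finset.prod_congr rfl
    intro i _
    push_cast
    ring

lemma poch_zero (a : ℝ) : poch a 0 = 1 := by simp [poch]

lemma poch_pos_s18 {b : ℝ} (hb : 0 < b) (s : ℕ) : 0 < poch b s := by
  unfold poch
  exact Finset.prod_pos fun i _ => by positivity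

/-- coefficients of the Kummer series -/
noncomputable def kc (a b : ℝ) (s : ℕ) : ℝ := poch a s / (poch b s * (Nat.factorial s))

lemma kc_succ {a b : ℝ} (hb : 0 < b) (s : ℕ) :
    ((s:ℝ)+1) * kc a b (s+1) = a / b * kc (a+1) (b+1) s := by
  unfold kc
  rw [poch_succ_left, poch_succ_left, Nat.factorial_succ]
  have := poch_pos_s18 (show 0 < b + 1 by linarith) s
  push_cast
  field_simp

lemma kc_succ' {a b : ℝ} (hb : 0 < b) (s : ℕ) :
    ((s:ℝ)+1) * (b + s) * kc a b (s+1) = (a + s) * kc a b s := by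
  unfold kc
  rw [poch_succ, poch_succ, Nat.factorial_succ]
  have := poch_pos_s18 hb s
  have : 0 < b + s := by positivity
  push_cast
  field_simp

lemma kc_bound (a : ℝ) {b : ℝ} (hb : 0 < b) : ∃ R : ℝ, 0 < R ∧
    ∀ s, |kc a b s| ≤ R ^ s / (Nat.factorial s) := by
  refine ⟨1 + |a| / b, by positivity, fun s => ?_⟩
  unfold kc
  have hp := poch_pos_s18 hb s
  have key : |poch a s| ≤ (1 + |a| / b) ^ s * poch b s := by
    clear hp
    induction s with
    | zero => simp [poch_zero]
    | succ n ih =>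
      rw [poch_succ, poch_succ, abs_mul, pow_succ]
      have h1 : |a + n| ≤ (1 + |a| / b) * (b + n) := by
        have h0 : |a + n| ≤ |a| + n := by
          refine (abs_add_le _ _).trans ?_
          simp
        have : (1 + |a| / b) * (b + n) = b + n + |a| + |a| / b * n := by
          field_simp
          ring
        rw [this]
        have : 0 ≤ |a| / b * n := by positivity
        linarith
      have hpn := poch_pos_s18 hb n
      calc _ ≤ ((1 + |a| / b) ^ n * poch b n) * ((1 + |a| / b) * (b + n)) := by gcongr
        _ = _ := by ring
  rw [abs_div, abs_of_pos (show 0 < poch b s * (Nat.factorial s) by positivity),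
    div_le_div_iff₀ (by positivity) (by positivity)]
  calc _ ≤ ((1 + |a| / b) ^ s * poch b s) * (Nat.factorial s) := by gcongr
    _ = _ := by ring

lemma kc_summable_abs (a : ℝ) {b : ℝ} (hb : 0 < b) (z : ℝ) :
    Summable fun s => ‖kc a b s * z ^ s‖ := by
  obtain ⟨R, hR, h⟩ := kc_bound a hb
  refine Summable.of_nonneg_of_le (fun _ => norm_nonneg _) (fun s => ?_)
    (Real.summable_pow_div_factorial (R * |z|))
  rw [norm_mul, norm_pow, Real.norm_eq_abs, Real.norm_eq_abs, mul_pow, mul_div_right_comm]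
  gcongr
  exact h s

lemma kummer_hasSum (a : ℝ) {b : ℝ} (hb : 0 < b) (z : ℝ) :
    HasSum (fun s => kc a b s * z ^ s) (kummerM a b z) :=
  (kc_summable_abs a hb z).of_norm.hasSum

lemma kummer_hasDerivAt (a : ℝ) {b : ℝ} (hb : 0 < b) (z : ℝ) :
    HasDerivAt (kummerM a b) (a / b * kummerM (a+1) (b+1) z) z := by
  have hb1 : 0 < b + 1 := by linarith
  set r : ℝ := |z| + 1 with hr
  have hr0 : 0 < r := by positivity
  have hsum : Summable fun s : ℕ => ‖kc a b s * (s * r ^ (s-1))‖ := by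
    rw [← summable_nat_add_iff 1]
    refine ((kc_summable_abs (a+1) hb1 r).mul_left |a/b|).congr fun s => ?_
    rw [← Real.norm_eq_abs, ← norm_mul, ← mul_assoc, ← kc_succ hb]
    congr 1
    rw [Nat.add_sub_cancel]
    push_cast
    ring
  have hd := hasDerivAt_tsum_of_isPreconnected (t := Metric.ball (0:ℝ) r) (y₀ := 0) (y := z)
    (g := fun s z => kc a b s * z ^ s) (g' := fun s z => kc a b s * (s * z ^ (s-1)))
    hsum Metric.isOpen_ball (convex_ball _ _).isPreconnected
    (fun n y _ => (hasDerivAt_pow n y).const_mul _)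
    (fun n y hy => by
      have hy' : |y| ≤ r := by simpa using (le_of_lt (mem_ball_zero_iff.mp hy))
      rw [norm_mul, norm_mul, norm_mul, norm_mul, norm_pow, norm_pow]
      simp only [Real.norm_eq_abs]
      rw [abs_of_pos hr0]
      gcongr)
    (by simpa using hr0) (kummer_hasSum a hb 0).summable
    (by simp [hr])
  suffices he : a / b * kummerM (a+1) (b+1) z = ∑' s : ℕ, kc a b s * (s * z ^ (s-1)) by
    rw [he]
    exact hd
  have hsum' : Summable fun s : ℕ => kc a b s * (s * z ^ (s-1)) := by
    refine Summable.of_norm_bounded hsum fun n => ?_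
    rw [norm_mul, norm_mul, norm_mul, norm_mul, norm_pow, norm_pow]
    simp only [Real.norm_eq_abs]
    rw [abs_of_pos hr0]
    gcongr
    simp [hr]
  rw [hsum'.tsum_eq_zero_add]
  rw [← (kummer_hasSum (a+1) hb1 z).tsum_eq, ← tsum_mul_left]
  simp only [Nat.cast_zero, zero_mul, mul_zero, zero_add]
  congr 1
  ext s
  rw [← mul_assoc, ← kc_succ hb, Nat.add_sub_cancel]
  push_cast
  ring

lemma kummer_hasSum_shift (a : ℝ) {b : ℝ} (hb : 0 < b) (z : ℝ) :
    HasSum (fun s : ℕ => (s:ℝ) * kc a b s * z ^ s) (z * (a / b * kummerM (a+1) (b+1) z)) := by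
  have hb1 : 0 < b + 1 := by linarith
  rw [← hasSum_nat_add_iff' 1]
  simp only [Finset.range_one, Finset.sum_singleton, Nat.cast_zero, zero_mul, sub_zero]
  have h := ((kummer_hasSum (a+1) hb1 z).mul_left (a/b)).mul_left z
  suffices he : (fun s : ℕ => ((s+1 : ℕ):ℝ) * kc a b (s+1) * z ^ (s+1))
      = fun s => z * (a / b * (kc (a+1) (b+1) s * z ^ s)) by
    rw [he]
    exact h
  ext s
  rw [← mul_assoc (a / b), ← kc_succ hb]
  push_cast
  ring

lemma kummer_ode (a : ℝ) {b : ℝ} (hb : 0 < b) (z : ℝ) :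
    z * (a / b * ((a+1) / (b+1) * kummerM (a+1+1) (b+1+1) z))
      + (b - z) * (a / b * kummerM (a+1) (b+1) z) = a * kummerM a b z := by
  have hb1 : 0 < b + 1 := by linarith
  have h1 := (kummer_hasSum_shift (a+1) hb1 z).mul_left (a / b)
  have h2 := ((kummer_hasSum (a+1) hb1 z).mul_left (a / b)).mul_left b
  have h3 := kummer_hasSum_shift a hb z
  have h4 := (kummer_hasSum a hb z).mul_left a
  have he : (fun s : ℕ => a / b * ((s:ℝ) * kc (a+1) (b+1) s * z ^ s)
      + b * (a / b * (kc (a+1) (b+1) s * z ^ s)) - (s:ℝ) * kc a b s * z ^ s)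
      = fun s => a * (kc a b s * z ^ s) := by
    funext s
    linear_combination (-(s + b) * z ^ s) * kc_succ (a := a) hb s
      + z ^ s * kc_succ' (a := a) hb s
  have h := (h1.add h2).sub h3
  rw [he] at h
  have h := h.unique h4
  linear_combination h

lemma vander (n : ℕ) : ∀ (b c : ℝ), 0 < b →
    ∑ k ∈ Finset.range (n+1), (n.choose k : ℝ) * ((-1)^k * (poch c k / poch b k))
      = poch (b - c) n / poch b n := by
  induction n with
  | zero => intro b c hb; simp [poch_zero]
  | succ n ih =>
    intro b c hb
    have hb1 : 0 < b + 1 := by linarith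
    have h1 := ih b c hb
    have h2 := ih (b+1) (c+1) hb1
    have hstep : ∑ k ∈ Finset.range (n+1+1), ((n+1).choose k : ℝ) * ((-1)^k * (poch c k / poch b k))
        = (∑ k ∈ Finset.range (n+1), (n.choose k : ℝ) * ((-1)^k * (poch c k / poch b k)))
        - c / b * ∑ k ∈ Finset.range (n+1), (n.choose k : ℝ) *
            ((-1)^k * (poch (c+1) k / poch (b+1) k)) := by
      have e1 : ∑ k ∈ Finset.range (n+1), (n.choose k : ℝ) * ((-1)^k * (poch c k / poch b k))
          = ∑ k ∈ Finset.range (n+1+1), (n.choose k : ℝ) * ((-1)^k * (poch c k / poch b k)) := by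
        rw [Finset.sum_range_succ _ (n+1)]
        simp
      rw [e1, Finset.sum_range_succ' _ (n+1), Finset.sum_range_succ' _ (n+1), Finset.mul_sum]
      have : ∀ A B C D : ℝ, A = B - C → A + D = B + D - C := by intros; linarith
      simp only [Nat.choose_zero_right]
      apply this
      rw [← Finset.sum_sub_distrib]
      apply Finset.sum_congr rfl
      intro k _
      rw [Nat.choose_succ_succ, poch_succ_left, poch_succ_left]
      have := poch_pos_s18 hb1 k
      push_cast
      field_simp
      ring
    rw [hstep, h1, h2, show b + 1 - (c + 1) = b - c by ring]
    have e := poch_succ_left b n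
    have e' := poch_succ b n
    have p1 := poch_pos_s18 hb n
    have p2 := poch_pos_s18 hb1 n
    have p3 : 0 < b + n := by positivity
    rw [poch_succ (b - c), poch_succ b]
    have h5 : c / b * (poch (b - c) n / poch (b + 1) n) =
       c * poch (b-c) n / (poch b n * (b + n)) := by
      rw [← e', e]
      field_simp
    rw [h5]
    field_simp
    ring

lemma kummer_transform (a : ℝ) {b : ℝ} (hb : 0 < b) (z : ℝ) :
    kummerM a b (-z) = Real.exp (-z) * kummerM (b - a) b z := by
  have hx : HasSum (fun n : ℕ => (-z) ^ n / (n.factorial : ℝ)) (Real.exp (-z)) := by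
    rw [Real.exp_eq_exp_ℝ]
    exact NormedSpace.expSeries_div_hasSum_exp (-z)
  have hxn : Summable fun n : ℕ => ‖(-z) ^ n / (n.factorial : ℝ)‖ := by
    refine (Real.summable_pow_div_factorial |z|).congr fun n => ?_
    simp
  have h := tsum_mul_tsum_eq_tsum_sum_range_of_summable_norm
    (kc_summable_abs (b - a) hb z) hxn
  rw [hx.tsum_eq, (kummer_hasSum (b-a) hb z).tsum_eq] at h
  rw [mul_comm, h, ← (kummer_hasSum a hb (-z)).tsum_eq]
  congr 1
  ext n
  have hv := vander n b (b - a) hb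
  rw [sub_sub_cancel] at hv
  have : kc a b n = poch a n / poch b n / n.factorial := by
    unfold kc
    rw [div_div]
  rw [this, ← hv, Finset.sum_div, Finset.sum_mul]
  apply Finset.sum_congr rfl
  intro k hk
  have hk' : k ≤ n := by simp at hk; omega
  have hp := poch_pos_s18 hb k
  obtain ⟨m, rfl⟩ := Nat.exists_eq_add_of_le hk'
  rw [Nat.cast_add_choose]
  unfold kc
  rw [show k + m - k = m by omega, neg_pow z m, neg_pow z (k+m), pow_add, pow_add]
  have : ((-1:ℝ)^k)^2 = 1 := by rw [← pow_mul, mul_comm, pow_mul]; simp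
  field_simp
  rw [this]
  try ring

open MeasureTheory in
lemma kummer_int {c b : ℝ} (hc : 0 < c) (hb : 0 < b) (η : ℝ) :
    ∫ y in Set.Ioi (0:ℝ), (∑' n : ℕ, (η * y) ^ (2 * n) / (poch b n * n.factorial)) *
      (y ^ (2 * c - 1) * Real.exp (-y ^ 2)) = Real.Gamma c / 2 * kummerM c b (η ^ 2) := by
  set F : ℕ → ℝ → ℝ := fun n y => (η ^ 2) ^ n / (poch b n * n.factorial) *
    (y ^ (2 * c - 1 + 2 * n) * Real.exp (-y ^ (2:ℝ))) with hF
  have hGam : ∀ n : ℕ, Real.Gamma (c + n) = poch c n * Real.Gamma c := by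
    intro n
    induction n with
    | zero => simp [poch_zero]
    | succ n ih =>
      rw [poch_succ, show c + ((n + 1 : ℕ) : ℝ) = (c + n) + 1 by push_cast; ring,
        Real.Gamma_add_one (by positivity), ih]
      ring
  have hlt : ∀ n : ℕ, -1 < 2 * c - 1 + 2 * (n:ℝ) := by
    intro n
    have : (0:ℝ) ≤ n := by positivity
    linarith
  have hInt : ∀ n, Integrable (F n) (volume.restrict (Set.Ioi 0)) := by
    intro n
    exact (integrableOn_rpow_mul_exp_neg_rpow (hlt n) two_pos).const_mul _
  have hval : ∀ n, ∫ y in Set.Ioi (0:ℝ), F n y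
      = Real.Gamma c / 2 * (kc c b n * (η ^ 2) ^ n) := by
    intro n
    simp only [hF]
    rw [integral_const_mul, integral_rpow_mul_exp_neg_rpow two_pos (hlt n),
      show (2 * c - 1 + 2 * (n:ℝ) + 1) / 2 = c + n by ring, hGam]
    unfold kc
    ring
  have hnonneg : ∀ n, ∀ y ∈ Set.Ioi (0:ℝ), 0 ≤ F n y := by
    intro n y hy
    have hy : 0 < y := hy
    have := poch_pos_s18 hb n
    simp only [hF]
    positivity
  have hnorm : ∀ n, ∫ y in Set.Ioi (0:ℝ), ‖F n y‖
      = Real.Gamma c / 2 * (kc c b n * (η ^ 2) ^ n) := by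
    intro n
    rw [← hval]
    apply setIntegral_congr_fun measurableSet_Ioi
    intro y hy
    exact Real.norm_of_nonneg (hnonneg n y hy)
  have hs := (kummer_hasSum c hb (η ^ 2)).mul_left (Real.Gamma c / 2)
  have h := hasSum_integral_of_summable_integral_norm hInt
    (by simp only [hnorm]; exact hs.summable)
  simp only [hval] at h
  rw [← h.unique hs]
  apply setIntegral_congr_fun measurableSet_Ioi
  intro y hy
  have hy : 0 < y := hy
  simp only
  rw [← tsum_mul_right]
  congr 1
  ext n
  simp only [hF]
  rw [Real.rpow_add hy, Real.rpow_two, show (2 * (n:ℝ)) = ((2 * n : ℕ) : ℝ) by push_cast; ring,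
    Real.rpow_natCast, mul_pow, pow_mul, pow_mul]
  ring

lemma fact_half (n : ℕ) : ((2 * n).factorial : ℝ) = 4 ^ n * (poch (1/2) n * n.factorial) := by
  induction n with
  | zero => simp [poch_zero]
  | succ n ih =>
    rw [show 2 * (n + 1) = (2 * n + 1) + 1 by ring, Nat.factorial_succ, Nat.factorial_succ,
      poch_succ, Nat.factorial_succ]
    push_cast
    rw [ih]
    ring

lemma fact_three_half (n : ℕ) :
    ((2 * n + 1).factorial : ℝ) = 4 ^ n * (poch (3/2) n * n.factorial) := by
  induction n with
  | zero => simp [poch_zero]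
  | succ n ih =>
    rw [show 2 * (n + 1) + 1 = (2 * n + 1 + 1) + 1 by ring, Nat.factorial_succ (2*n+1+1),
      Nat.factorial_succ (2*n+1), poch_succ, Nat.factorial_succ n]
    push_cast
    rw [ih]
    ring

lemma cosh_series (w : ℝ) :
    ∑' n : ℕ, w ^ (2 * n) / (poch (1/2) n * n.factorial) = Real.cosh (2 * w) := by
  rw [Real.cosh_eq_tsum]
  congr 1
  ext n
  have := poch_pos_s18 (show (0:ℝ) < 1/2 by norm_num) n
  rw [fact_half, mul_pow, pow_mul 2]
  norm_num
  field_simp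

lemma sinh_series (w : ℝ) :
    (2 * w) * ∑' n : ℕ, w ^ (2 * n) / (poch (3/2) n * n.factorial) = Real.sinh (2 * w) := by
  rw [Real.sinh_eq_tsum, ← tsum_mul_left]
  congr 1
  ext n
  have := poch_pos_s18 (show (0:ℝ) < 3/2 by norm_num) n
  rw [fact_three_half, pow_succ, mul_pow, pow_mul 2]
  norm_num
  field_simp

noncomputable def gH (α σ ε : ℝ) : ℝ := ∫ u : ℝ, (max 0 (σ + ε * u)) ^ α * Real.exp (-u ^ 2)

lemma gH_bound {α S : ℝ} (hα : 0 < α) (σ ε u : ℝ) (hσ : |σ| ≤ S) (hε : |ε| ≤ 1) :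
    ‖(max 0 (σ + ε * u)) ^ α * Real.exp (-u ^ 2)‖
      ≤ (α ^ α * Real.exp (S + 1 / 2)) * Real.exp (-(1/2) * u ^ 2) := by
  set x := max 0 (σ + ε * u) with hx
  have hx0 : 0 ≤ x := le_max_left _ _
  have hS : 0 ≤ S := (abs_nonneg _).trans hσ
  have hxle : x ≤ S + |u| := by
    apply max_le (by positivity)
    have h1 : ε * u ≤ |u| := by
      calc ε * u ≤ |ε * u| := le_abs_self _
        _ = |ε| * |u| := abs_mul _ _
        _ ≤ 1 * |u| := by gcongr
        _ = |u| := one_mul _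
    have := le_abs_self σ
    linarith
  have h1 : x ^ α ≤ α ^ α * Real.exp x := by
    have h2 : x / α ≤ Real.exp (x / α) := by
      have := Real.add_one_le_exp (x / α)
      linarith
    have h3 : x ≤ α * Real.exp (x / α) := by
      rw [div_le_iff₀ hα] at h2
      linarith
    calc x ^ α ≤ (α * Real.exp (x / α)) ^ α := Real.rpow_le_rpow hx0 h3 hα.le
      _ = α ^ α * Real.exp x := by
        rw [Real.mul_rpow hα.le (Real.exp_pos _).le, ← Real.exp_mul, div_mul_cancel₀ _ hα.ne']
  rw [Real.norm_of_nonneg (by positivity)]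
  calc _ ≤ (α ^ α * Real.exp x) * Real.exp (-u ^ 2) := by gcongr
    _ = α ^ α * Real.exp (x - u ^ 2) := by rw [mul_assoc, ← Real.exp_add]; rfl
    _ ≤ α ^ α * Real.exp (S + 1/2 + (-(1/2) * u ^ 2)) := by
        gcongr
        nlinarith [sq_nonneg (|u| - 1), sq_abs u]
    _ = _ := by rw [Real.exp_add]; ring

lemma gH_meas (α σ ε : ℝ) :
    Measurable fun u : ℝ => (max 0 (σ + ε * u)) ^ α * Real.exp (-u ^ 2) := by
  fun_prop

lemma gH_integrable {α : ℝ} (hα : 0 < α) (σ : ℝ) :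
    MeasureTheory.Integrable fun u : ℝ => (max 0 (σ + 1 * u)) ^ α * Real.exp (-u ^ 2) := by
  refine MeasureTheory.Integrable.mono'
    ((integrable_exp_neg_mul_sq (show (0:ℝ) < 1/2 by norm_num)).const_mul
      (α ^ α * Real.exp (|σ| + 1 / 2))) (gH_meas α σ 1).aestronglyMeasurable ?_
  exact Filter.Eventually.of_forall fun u => gH_bound hα σ 1 u le_rfl (by simp)

lemma gH_tendsto {α : ℝ} (hα : 0 < α) {σ : ℝ} (hσ : |σ| ≤ 1) :
    Filter.Tendsto (gH α σ) (nhdsWithin 0 (Set.Ioi 0))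
      (nhds ((max 0 σ) ^ α * Real.sqrt Real.pi)) := by
  have hlim : (max 0 σ) ^ α * Real.sqrt Real.pi
      = ∫ u : ℝ, (max 0 σ) ^ α * Real.exp (-u ^ 2) := by
    rw [MeasureTheory.integral_const_mul]
    have := integral_gaussian 1
    simp only [neg_mul, one_mul, div_one] at this
    rw [this]
  rw [hlim]
  unfold gH
  refine MeasureTheory.tendsto_integral_filter_of_dominated_convergence
    (fun u => (α ^ α * Real.exp (1 + 1 / 2)) * Real.exp (-(1/2) * u ^ 2)) ?_ ?_ ?_ ?_
  · exact Filter.Eventually.of_forall fun ε => (gH_meas α σ ε).aestronglyMeasurable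
  · have : Set.Ioc (0:ℝ) 1 ∈ nhdsWithin (0:ℝ) (Set.Ioi 0) :=
      Ioc_mem_nhdsGT one_pos
    filter_upwards [this] with ε hε
    refine Filter.Eventually.of_forall fun u => gH_bound hα σ ε u hσ ?_
    rw [abs_of_pos hε.1]
    exact hε.2
  · exact (integrable_exp_neg_mul_sq (show (0:ℝ) < 1/2 by norm_num)).const_mul _
  · refine Filter.Eventually.of_forall fun u => ?_
    have hc : Continuous fun ε : ℝ => (max 0 (σ + ε * u)) ^ α * Real.exp (-u ^ 2) := by
      refine Continuous.mul ?_ continuous_const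
      exact Continuous.rpow_const (by fun_prop) (fun _ => Or.inr hα.le)
    have := (hc.tendsto 0).mono_left (nhdsWithin_le_nhds (s := Set.Ioi 0))
    simpa using this

open MeasureTheory in
lemma shift_int {α : ℝ} (hα : 0 < α) (s : ℝ) :
    IntegrableOn (fun y : ℝ => y ^ α * Real.exp (-(y - s) ^ 2)) (Set.Ioi 0) ∧
    ∫ y in Set.Ioi (0:ℝ), y ^ α * Real.exp (-(y - s) ^ 2) = gH α s 1 := by
  have h1 := (gH_integrable hα s).comp_sub_right s
  have h2 : (fun y : ℝ => (max 0 (s + 1 * (y - s))) ^ α * Real.exp (-(y - s) ^ 2))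
      = (Set.Ioi (0:ℝ)).indicator (fun y : ℝ => y ^ α * Real.exp (-(y - s) ^ 2)) := by
    ext y
    by_cases hy : 0 < y
    · rw [Set.indicator_of_mem (Set.mem_Ioi.mpr hy)]
      rw [show s + 1 * (y - s) = y by ring, max_eq_right hy.le]
    · rw [Set.indicator_of_notMem (by simpa using hy)]
      rw [show s + 1 * (y - s) = y by ring, max_eq_left (not_lt.mp hy), Real.zero_rpow hα.ne']
      simp
  constructor
  · rw [← integrable_indicator_iff measurableSet_Ioi, ← h2]
    exact h1
  · rw [← integral_indicator measurableSet_Ioi, ← h2]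
    unfold gH
    exact integral_sub_right_eq_self
      (fun u : ℝ => (max 0 (s + 1 * u)) ^ α * Real.exp (-u ^ 2)) s

lemma gH_scale {α η : ℝ} (hη : 0 < η) (σ : ℝ) :
    gH α (σ * η) 1 = η ^ α * gH α σ η⁻¹ := by
  unfold gH
  rw [← MeasureTheory.integral_const_mul]
  congr 1
  ext u
  rw [← mul_assoc, ← Real.mul_rpow hη.le (le_max_left _ _), mul_max_of_nonneg _ _ hη.le]
  congr 3
  · simp
  · field_simp

lemma kM1 {α η : ℝ} (hα : 0 < α) (hη : 0 < η) :
    kummerM (-α / 2) (1 / 2) (-η ^ 2) =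
      η ^ α / Real.Gamma ((α + 1) / 2) * (gH α 1 η⁻¹ + gH α (-1) η⁻¹) := by
  have hG : 0 < Real.Gamma ((α + 1) / 2) := Real.Gamma_pos_of_pos (by linarith)
  have h := kummer_int (c := (α + 1) / 2) (b := 1/2) (by linarith) (by norm_num) η
  rw [kummer_transform _ (by norm_num), show (1:ℝ)/2 - -α/2 = (α + 1) / 2 by ring]
  have hI : Real.exp (-η ^ 2) * ∫ y in Set.Ioi (0:ℝ),
      (∑' n : ℕ, (η * y) ^ (2 * n) / (poch (1/2) n * n.factorial)) *
      (y ^ (2 * ((α + 1) / 2) - 1) * Real.exp (-y ^ 2))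
      = (gH α (1 * η) 1 + gH α (-1 * η) 1) / 2 := by
    rw [← (shift_int hα (1 * η)).2, ← (shift_int hα (-1 * η)).2,
      ← MeasureTheory.integral_add (shift_int hα (1 * η)).1 (shift_int hα (-1 * η)).1,
      ← MeasureTheory.integral_const_mul, ← MeasureTheory.integral_div]
    apply MeasureTheory.setIntegral_congr_fun measurableSet_Ioi
    intro y hy
    simp only
    rw [cosh_series, Real.cosh_eq, show 2 * ((α + 1) / 2) - 1 = α by ring,
      show -(y - 1 * η) ^ 2 = -η ^ 2 + 2 * (η * y) + -y ^ 2 by ring,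
      show -(y - -1 * η) ^ 2 = -η ^ 2 + -(2 * (η * y)) + -y ^ 2 by ring,
      Real.exp_add, Real.exp_add, Real.exp_add, Real.exp_add]
    ring
  rw [h, gH_scale hη, gH_scale hη] at hI
  rw [div_mul_eq_mul_div, eq_div_iff hG.ne']
  linear_combination 2 * hI

lemma kM2 {α η : ℝ} (hα : 0 < α) (hη : 0 < η) :
    η * kummerM (-α / 2 + 1 / 2) (3 / 2) (-η ^ 2) =
      η ^ α / (2 * Real.Gamma (α / 2 + 1)) * (gH α 1 η⁻¹ - gH α (-1) η⁻¹) := by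
  have hG : 0 < Real.Gamma (α / 2 + 1) := Real.Gamma_pos_of_pos (by linarith)
  have h := kummer_int (c := α / 2 + 1) (b := 3/2) (by linarith) (by norm_num) η
  rw [kummer_transform _ (by norm_num), show (3:ℝ)/2 - (-α/2 + 1/2) = α / 2 + 1 by ring]
  have hI : (η * Real.exp (-η ^ 2)) * ∫ y in Set.Ioi (0:ℝ),
      (∑' n : ℕ, (η * y) ^ (2 * n) / (poch (3/2) n * n.factorial)) *
      (y ^ (2 * (α / 2 + 1) - 1) * Real.exp (-y ^ 2))
      = (gH α (1 * η) 1 - gH α (-1 * η) 1) / 4 := by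
    rw [← (shift_int hα (1 * η)).2, ← (shift_int hα (-1 * η)).2,
      ← MeasureTheory.integral_sub (shift_int hα (1 * η)).1 (shift_int hα (-1 * η)).1,
      ← MeasureTheory.integral_const_mul, ← MeasureTheory.integral_div]
    apply MeasureTheory.setIntegral_congr_fun measurableSet_Ioi
    intro y hy
    have hy : 0 < y := hy
    simp only
    have hs := sinh_series (η * y)
    rw [Real.sinh_eq] at hs
    rw [show 2 * (α / 2 + 1) - 1 = α + 1 by ring, Real.rpow_add hy, Real.rpow_one,
      show -(y - 1 * η) ^ 2 = -η ^ 2 + 2 * (η * y) + -y ^ 2 by ring,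
      show -(y - -1 * η) ^ 2 = -η ^ 2 + -(2 * (η * y)) + -y ^ 2 by ring,
      Real.exp_add, Real.exp_add, Real.exp_add, Real.exp_add]
    linear_combination (Real.exp (-η ^ 2) * y ^ α * Real.exp (-y ^ 2) / 2) * hs
  rw [h, gH_scale hη, gH_scale hη] at hI
  rw [div_mul_eq_mul_div, eq_div_iff (by positivity)]
  linear_combination 4 * hI

lemma comp_deriv (a : ℝ) {b : ℝ} (hb : 0 < b) (η : ℝ) :
    HasDerivAt (fun η => kummerM a b (-η ^ 2))
      (-2 * η * (a / b * kummerM (a+1) (b+1) (-η ^ 2))) η := by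
  have h := (kummer_hasDerivAt a hb (-η ^ 2)).comp η ((hasDerivAt_pow 2 η).neg)
  refine h.congr_deriv ?_
  push_cast
  ring

lemma profile (α E F : ℝ) : ∃ f1 f2 : ℝ → ℝ,
    (∀ η, HasDerivAt (fun η => E * kummerM (-α / 2) (1 / 2) (-η ^ 2)
      + F * η * kummerM (-α / 2 + 1 / 2) (3 / 2) (-η ^ 2)) (f1 η) η) ∧
    (∀ η, HasDerivAt f1 (f2 η) η) ∧
    (∀ η, f2 η = 2 * α * (E * kummerM (-α / 2) (1 / 2) (-η ^ 2)
      + F * η * kummerM (-α / 2 + 1 / 2) (3 / 2) (-η ^ 2)) - 2 * η * f1 η) ∧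
    f1 0 = F * kummerM (-α / 2 + 1 / 2) (3 / 2) 0 := by
  have b1 : (0:ℝ) < 1/2 := by norm_num
  have b1' : (0:ℝ) < 1/2 + 1 := by norm_num
  have b2 : (0:ℝ) < 3/2 := by norm_num
  have b2' : (0:ℝ) < 3/2 + 1 := by norm_num
  set a1 := -α / 2 with ha1
  set a2 := -α / 2 + 1/2 with ha2
  set P1 : ℝ → ℝ := fun η => a1 / (1/2) * kummerM (a1+1) (1/2+1) (-η ^ 2) with hP1
  set P2 : ℝ → ℝ := fun η => a2 / (3/2) * kummerM (a2+1) (3/2+1) (-η ^ 2) with hP2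
  set Q1 : ℝ → ℝ := fun η => a1 / (1/2) * ((a1+1) / (1/2+1) *
    kummerM (a1+1+1) (1/2+1+1) (-η ^ 2)) with hQ1
  set Q2 : ℝ → ℝ := fun η => a2 / (3/2) * ((a2+1) / (3/2+1) *
    kummerM (a2+1+1) (3/2+1+1) (-η ^ 2)) with hQ2
  have dP1 : ∀ η, HasDerivAt P1 (-2 * η * Q1 η) η := fun η =>
    ((comp_deriv (a1+1) b1' η).const_mul (a1 / (1/2))).congr_deriv (by simp only [hQ1]; ring)
  have dP2 : ∀ η, HasDerivAt P2 (-2 * η * Q2 η) η := fun η =>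
    ((comp_deriv (a2+1) b2' η).const_mul (a2 / (3/2))).congr_deriv (by simp only [hQ2]; ring)
  have dM1 : ∀ η, HasDerivAt (fun η => kummerM a1 (1/2) (-η ^ 2)) (-2 * η * P1 η) η := fun η =>
    comp_deriv a1 b1 η
  have dM2 : ∀ η, HasDerivAt (fun η => kummerM a2 (3/2) (-η ^ 2)) (-2 * η * P2 η) η := fun η =>
    comp_deriv a2 b2 η
  have o1 : ∀ η, (-η ^ 2) * Q1 η + (1/2 - (-η ^ 2)) * P1 η = a1 * kummerM a1 (1/2) (-η ^ 2) :=
    fun η => kummer_ode a1 b1 (-η ^ 2)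
  have o2 : ∀ η, (-η ^ 2) * Q2 η + (3/2 - (-η ^ 2)) * P2 η = a2 * kummerM a2 (3/2) (-η ^ 2) :=
    fun η => kummer_ode a2 b2 (-η ^ 2)
  clear_value P1 P2 Q1 Q2
  refine ⟨fun η => E * (-2 * η * P1 η) + F * (kummerM a2 (3/2) (-η ^ 2) + η * (-2 * η * P2 η)),
    fun η => E * (-2 * P1 η + -2 * η * (-2 * η * Q1 η))
      + F * (-6 * η * P2 η + 4 * η ^ 3 * Q2 η), ?_, ?_, ?_, ?_⟩
  · intro η
    have h := ((dM1 η).const_mul E).add ((((hasDerivAt_id η).const_mul F)).mul (dM2 η))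
    refine h.congr_deriv ?_
    simp only [id]
    ring
  · intro η
    have i1 := ((hasDerivAt_id η).const_mul (-2)).mul (dP1 η)
    have i2 := (hasDerivAt_id η).mul (((hasDerivAt_id η).const_mul (-2)).mul (dP2 η))
    have h := (i1.const_mul E).add (((dM2 η).add i2).const_mul F)
    refine h.congr_deriv ?_
    simp only [id, Pi.mul_apply]
    ring
  · intro η
    have h1 := o1 η
    have h2 := o2 η
    rw [show α = -2 * a1 by rw [ha1]; ring]
    rw [show a2 = a1 + 1/2 by rw [ha2]] at h2 ⊢
    linear_combination (-4 * E) * h1 + (-4 * F * η) * h2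
  · simp

/-- when `0 < h₀ ≤ 2^α Γ(α/2+1) k_s T_i d_s^{(α−1)/2}/(T_∞ √π)`, the
problem reduces to a pure heat-conduction problem for the solid phase, whose explicit
solution `Ψ_s` (with the displayed coefficients `E_s, F_s`) satisfies the heat equation,
the convective condition at `x = 0`, and the initial condition `Ψ_s(x,0) = −T_i x^α`. -/
theorem statement_18 (α ks ds Ti Tinf h₀ : ℝ)
    (hα : 0 < α) (hαnotint : ∀ n : ℤ, α ≠ n)
    (hks : 0 < ks) (hds : 0 < ds) (hTi : 0 < Ti) (hTinf : 0 < Tinf) (hh₀ : 0 < h₀)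
    (hcond : h₀ ≤ (2:ℝ) ^ α * Real.Gamma (α / 2 + 1) * ks * Ti * ds ^ ((α - 1) / 2)
      / (Tinf * Real.sqrt Real.pi))
    (Es Fs : ℝ)
    (hEs : Es = (-Ti * ds ^ (α / 2) * ks * Real.Gamma (α + 1)
        + Real.Gamma ((α + 1) / 2) * h₀ * Real.sqrt ds * Tinf) /
      (ks * Real.Gamma (α / 2 + 1) + h₀ * Real.sqrt ds * Real.Gamma ((α + 1) / 2)))
    (hFs : Fs = 2 * Real.sqrt ds * h₀ * (Es - Tinf) / ks)
    (Ψs : ℝ → ℝ → ℝ)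
    (hΨs : ∀ x t : ℝ, Ψs x t =
      t ^ (α / 2) *
        (Es * kummerM (-α / 2) (1 / 2) (-(x / (2 * Real.sqrt (ds * t))) ^ 2)
          + Fs * (x / (2 * Real.sqrt (ds * t))) *
              kummerM (-α / 2 + 1 / 2) (3 / 2) (-(x / (2 * Real.sqrt (ds * t))) ^ 2))) :
    (∀ x t : ℝ, 0 < x → 0 < t →
        deriv (fun τ => Ψs x τ) t = ds * deriv (deriv (fun y => Ψs y t)) x) ∧
    (∀ t : ℝ, 0 < t →
        ks * deriv (fun y => Ψs y t) 0
          = h₀ * t ^ (-(1:ℝ) / 2) * (Ψs 0 t - Tinf * t ^ (α / 2))) ∧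
    (∀ x : ℝ, 0 < x →
        Filter.Tendsto (fun t : ℝ => Ψs x t) (nhdsWithin 0 (Set.Ioi 0))
          (nhds (-Ti * x ^ α))) := by
  have hsd : 0 < Real.sqrt ds := Real.sqrt_pos.mpr hds
  refine ⟨?_, ?_, ?_⟩
  · obtain ⟨f1, f2, d1, d2, ho, -⟩ := profile α Es Fs
    set f : ℝ → ℝ := fun η => Es * kummerM (-α / 2) (1 / 2) (-η ^ 2)
      + Fs * η * kummerM (-α / 2 + 1 / 2) (3 / 2) (-η ^ 2) with hf
    have hΨ : ∀ x t : ℝ, Ψs x t = t ^ (α / 2) * f (x / (2 * Real.sqrt (ds * t))) := hΨs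
    have ho' : ∀ η, f2 η = 2 * α * f η - 2 * η * f1 η := ho
    clear_value f
    intro x t hx ht
    have hdt : 0 < ds * t := by positivity
    have hs : 0 < Real.sqrt (ds * t) := Real.sqrt_pos.mpr hdt
    have hsq : Real.sqrt (ds * t) ^ 2 = ds * t := Real.sq_sqrt hdt.le
    set c := 2 * Real.sqrt (ds * t) with hc
    have hc0 : 0 < c := by positivity
    have hd : ∀ y, HasDerivAt (fun y => Ψs y t) (t ^ (α / 2) * (f1 (y / c) * (1 / c))) y := by
      intro y
      have h := ((d1 (y / c)).comp y ((hasDerivAt_id y).div_const c)).const_mul (t ^ (α / 2))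
      have he : (fun y => Ψs y t) = fun y => t ^ (α / 2) * f (y / c) := by
        ext y
        rw [hΨ]
      rw [he]
      exact h
    have hd' : deriv (fun y => Ψs y t) = fun y => t ^ (α / 2) * (f1 (y / c) * (1 / c)) := by
      ext y
      exact (hd y).deriv
    have hdd : HasDerivAt (fun y => t ^ (α / 2) * (f1 (y / c) * (1 / c)))
        (t ^ (α / 2) * (f2 (x / c) * (1 / c) * (1 / c))) x :=
      (((d2 (x / c)).comp x ((hasDerivAt_id x).div_const c)).mul_const (1 / c)).const_mul
        (t ^ (α / 2))
    rw [hd', hdd.deriv]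
    have hsqd : HasDerivAt (fun τ => x / (2 * Real.sqrt (ds * τ))) (-(x / c) / (2 * t)) t := by
      have h0 : HasDerivAt (fun τ => ds * τ) ds t := by
        simpa using (hasDerivAt_id t).const_mul ds
      have h1 := (h0.sqrt hdt.ne').const_mul 2
      have h2 := (hasDerivAt_const t x).div h1 hc0.ne'
      refine h2.congr_deriv ?_
      rw [← hc]
      have hc2 : c ^ 2 = 4 * (ds * t) := by rw [hc]; linear_combination 4 * hsq
      rw [hc2]
      field_simp
      ring
    have ht1 : HasDerivAt (fun τ : ℝ => τ ^ (α / 2)) (α / 2 * t ^ (α / 2 - 1)) t :=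
      Real.hasDerivAt_rpow_const (Or.inl ht.ne')
    have hT := ht1.mul ((d1 (x / c)).comp t hsqd)
    have he : (fun τ => Ψs x τ) = (fun τ : ℝ => τ ^ (α / 2)) *
        (f ∘ fun τ => x / (2 * Real.sqrt (ds * τ))) := by
      ext τ
      rw [hΨ]
      rfl
    rw [he, hT.deriv, ho', Real.rpow_sub ht, Real.rpow_one]
    simp only [Function.comp]
    rw [← hc]
    have hc2 : c ^ 2 = 4 * (ds * t) := by rw [hc]; linear_combination 4 * hsq
    have hcc : 1 / c * (1 / c) = 1 / (4 * (ds * t)) := by rw [← hc2]; field_simp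
    rw [mul_assoc _ (1/c) (1/c), hcc]
    generalize x / c = η
    field_simp
    ring
  · obtain ⟨f1, f2, d1, d2, -, h0⟩ := profile α Es Fs
    intro t ht
    have hst : 0 < Real.sqrt t := Real.sqrt_pos.mpr ht
    have hM0 : ∀ a b : ℝ, 0 < b → kummerM a b 0 = 1 := by
      intro a b hb
      rw [← (kummer_hasSum a hb 0).tsum_eq, tsum_eq_single 0]
      · simp [kc, poch_zero]
      · intro n hn
        simp [hn]
    rw [hM0 _ _ (by norm_num), mul_one] at h0
    have h := ((d1 (0 / (2 * Real.sqrt (ds * t)))).comp 0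
      ((hasDerivAt_id (0:ℝ)).div_const (2 * Real.sqrt (ds * t)))).const_mul (t ^ (α / 2))
    have he : (fun y => Ψs y t) = _ := funext fun y => hΨs y t
    have h' : deriv (fun y => Ψs y t) 0 = t ^ (α / 2) * (f1 (0 / (2 * Real.sqrt (ds * t)))
        * (1 / (2 * Real.sqrt (ds * t)))) := by
      rw [he]
      exact h.deriv
    rw [h', zero_div, h0, hΨs]
    have e0 : -((0:ℝ) / (2 * Real.sqrt (ds * t))) ^ 2 = 0 := by simp
    rw [e0, hM0 _ _ (by norm_num), hM0 _ _ (by norm_num), hFs, Real.sqrt_mul hds.le]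
    rw [show -(1:ℝ)/2 = -(1/2) by ring, Real.rpow_neg ht.le, ← Real.sqrt_eq_rpow]
    field_simp
    ring
  · intro x hx
    have hG1 : 0 < Real.Gamma ((α + 1) / 2) := Real.Gamma_pos_of_pos (by linarith)
    have hG2 : 0 < Real.Gamma (α / 2 + 1) := Real.Gamma_pos_of_pos (by linarith)
    have h2 : (0:ℝ) < 2 ^ α := by positivity
    have hdα : 0 < ds ^ (α / 2) := by positivity
    have hη : Filter.Tendsto (fun t : ℝ => (x / (2 * Real.sqrt (ds * t)))⁻¹)
        (nhdsWithin 0 (Set.Ioi 0)) (nhdsWithin 0 (Set.Ioi 0)) := by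
      apply tendsto_nhdsWithin_of_tendsto_nhds_of_eventually_within
      · have hc : Continuous fun t : ℝ => (2 * Real.sqrt (ds * t)) / x := by fun_prop
        have := (hc.tendsto 0).mono_left (nhdsWithin_le_nhds (s := Set.Ioi 0))
        simpa [inv_div] using this
      · filter_upwards [self_mem_nhdsWithin] with t ht
        have ht : 0 < t := ht
        have : 0 < Real.sqrt (ds * t) := Real.sqrt_pos.mpr (by positivity)
        simp only [Set.mem_Ioi]
        positivity
    have t1 := (gH_tendsto hα (σ := 1) (by simp)).comp hη
    have t2 := (gH_tendsto hα (σ := -1) (by simp)).comp hη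
    rw [max_eq_right zero_le_one, Real.one_rpow, one_mul] at t1
    rw [max_eq_left (by norm_num), Real.zero_rpow hα.ne', zero_mul] at t2
    have hT := (((t1.add t2).const_mul (Es / Real.Gamma ((α + 1) / 2))).add
      ((t1.sub t2).const_mul (Fs / (2 * Real.Gamma (α / 2 + 1))))).const_mul
        (x ^ α / (2 ^ α * ds ^ (α / 2)))
    have hval : x ^ α / (2 ^ α * ds ^ (α / 2)) *
        (Es / Real.Gamma ((α + 1) / 2) * (Real.sqrt Real.pi + 0)
          + Fs / (2 * Real.Gamma (α / 2 + 1)) * (Real.sqrt Real.pi - 0)) = -Ti * x ^ α := by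
      have hdup := Real.Gamma_mul_Gamma_add_half ((α + 1) / 2)
      rw [show (α + 1) / 2 + 1 / 2 = α / 2 + 1 by ring, show 2 * ((α + 1) / 2) = α + 1 by ring,
        show 1 - (α + 1) = -α by ring, Real.rpow_neg two_pos.le] at hdup
      have hdup' : Real.Gamma (α + 1) * Real.sqrt Real.pi
          = 2 ^ α * (Real.Gamma ((α + 1) / 2) * Real.Gamma (α / 2 + 1)) := by
        rw [hdup]
        field_simp
      have hD : 0 < ks * Real.Gamma (α / 2 + 1)
          + h₀ * Real.sqrt ds * Real.Gamma ((α + 1) / 2) := by positivity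
      rw [eq_div_iff hD.ne'] at hEs
      have hFs' : Fs * ks = 2 * Real.sqrt ds * h₀ * (Es - Tinf) := by
        rw [hFs]
        field_simp
      generalize Real.Gamma ((α + 1) / 2) = G1 at *
      generalize Real.Gamma (α / 2 + 1) = G2 at *
      generalize Real.Gamma (α + 1) = G3 at *
      generalize Real.sqrt Real.pi = p at *
      generalize Real.sqrt ds = sd at *
      generalize (2:ℝ) ^ α = w at *
      generalize ds ^ (α / 2) = dd at *
      generalize x ^ α = X at *
      have key : Es / G1 * (p + 0) + Fs / (2 * G2) * (p - 0) = -Ti * (w * dd) := by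
        field_simp
        apply mul_right_cancel₀ hks.ne'
        linear_combination 2 * p * hEs + p * G1 * hFs' - 2 * Ti * dd * ks * hdup'
      rw [key]
      field_simp
    rw [hval] at hT
    refine hT.congr' ?_
    filter_upwards [self_mem_nhdsWithin] with t ht
    have ht : 0 < t := ht
    have hst : 0 < Real.sqrt (ds * t) := Real.sqrt_pos.mpr (by positivity)
    have hη0 : 0 < x / (2 * Real.sqrt (ds * t)) := by positivity
    rw [hΨs, mul_assoc Fs, kM1 hα hη0, kM2 hα hη0]
    have hpow : t ^ (α / 2) * (x / (2 * Real.sqrt (ds * t))) ^ α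
        = x ^ α / (2 ^ α * ds ^ (α / 2)) := by
      have htα : 0 < t ^ (α / 2) := by positivity
      rw [Real.div_rpow hx.le (by positivity), Real.mul_rpow two_pos.le hst.le,
        Real.sqrt_eq_rpow, ← Real.rpow_mul (by positivity), show 1 / 2 * α = α / 2 by ring,
        Real.mul_rpow hds.le ht.le]
      field_simp
    rw [← hpow]
    simp only [Function.comp]
    ring
end
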